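/- arXiv:math-ph/0512091 — 2 statements merged into one kernel-verified Lean document; each statement's English description precedes it below -/
import Mathlib

section
/- Let X be a Banach space, I ⊆ ℝ an interval, and let U(t,s), (t,s) ∈ D_I, be a strongly continuous, exponentially bounded propagator with constants M ≥ 1 and ω ∈ ℝ. Then for every 1 ≤ p < ∞ the formula (T(σ)f)(t) = U(t,t−σ)f(t−σ) if t, t−σ ∈ I and (T(σ)f)(t) = 0 if t ∈ I but t−σ ∉ I (for σ ≥ 0) defines a strongly continuous semigroup (T(σ))_{σ≥0} of bounded linear operators on L^p(I,X), and ‖T(σ)‖ ≤ M e^{ωσ}. -/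
open MeasureTheory Set Real Filter
open scoped ENNReal Topology Classical

/-!
For fixed `σ ≥ 0` the operator `f ↦ U(·, · - σ) f(· - σ)` is translation by `σ` followed by
multiplication with operators of norm at most `M e^{ωσ}`, so translation invariance of Lebesgue
measure gives boundedness on `L^p(I, X)`. The semigroup law is the cocycle identity of `U`, applied
through the intermediate time `t - σ`, which lies in `I` because `I` is an interval. The operators
are locally uniformly bounded in `σ`, so strong continuity need only be checked on the dense set of
compactly supported continuous `f`. There the orbits converge pointwise away from the `t` with
`t - σ₀` an endpoint of `I`, and dominated convergence applies.
-/

section Operators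

variable {ι 𝕜 E F : Type*} [NontriviallyNormedField 𝕜]
  [NormedAddCommGroup E] [NormedSpace 𝕜 E] [NormedAddCommGroup F] [NormedSpace 𝕜 F]
  {l : Filter ι} {A : ι → E →L[𝕜] F} {C : ℝ}

theorem tendsto_clm_apply_of_eventually_norm_le {u : ι → E} {x : E} {y : F}
    (hA : ∀ᶠ i in l, ‖A i‖ ≤ C) (hu : Tendsto u l (𝓝 x))
    (hAx : Tendsto (fun i => A i x) l (𝓝 y)) : Tendsto (fun i => A i (u i)) l (𝓝 y) := by
  have hdiff : Tendsto (fun i => A i (u i - x)) l (𝓝 0) := by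
    refine squeeze_zero_norm' (hA.mono fun i hi => (A i).le_of_opNorm_le hi _) ?_
    simpa using (tendsto_iff_norm_sub_tendsto_zero.1 hu).const_mul C
  simpa using hdiff.add hAx

theorem tendsto_clm_apply_of_dense {A₀ : E →L[𝕜] F} {D : Set E} (hD : Dense D)
    (hA : ∀ᶠ i in l, ‖A i‖ ≤ C) (hAD : ∀ y ∈ D, Tendsto (fun i => A i y) l (𝓝 (A₀ y))) (x : E) :
    Tendsto (fun i => A i x) l (𝓝 (A₀ x)) := by
  rcases l.eq_or_neBot with rfl | _
  · exact tendsto_bot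
  have hC : 0 ≤ C := let ⟨i, hi⟩ := hA.exists; (norm_nonneg _).trans hi
  refine Metric.tendsto_nhds.2 fun ε hε => ?_
  set δ := ε / (C + ‖A₀‖ + 1)
  have hδ : 0 < δ := by positivity
  obtain ⟨y, hyD, hxy⟩ := hD.exists_dist_lt x hδ
  rw [dist_eq_norm] at hxy
  filter_upwards [hA, Metric.tendsto_nhds.1 (hAD y hyD) δ hδ] with i hi hiy
  calc dist (A i x) (A₀ x)
      ≤ dist (A i x) (A i y) + dist (A i y) (A₀ y) + dist (A₀ y) (A₀ x) := dist_triangle4 _ _ _ _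
    _ = ‖A i (x - y)‖ + dist (A i y) (A₀ y) + ‖A₀ (x - y)‖ := by
        rw [dist_eq_norm, dist_comm (A₀ y), dist_eq_norm (A₀ x), map_sub, map_sub]
    _ < C * δ + δ + ‖A₀‖ * δ := by
        have h₁ := (A i).le_of_opNorm_le_of_le hi hxy.le
        have h₂ := A₀.le_opNorm_of_le hxy.le
        linarith
    _ = ε := by simp only [δ]; field_simp; ring

end Operators

section Lp

variable {ι α β 𝕜 E F : Type*} [MeasurableSpace α] [MeasurableSpace β]
  [NormedAddCommGroup E] [NormedAddCommGroup F] {μ : Measure α} {ν : Measure β} {p : ℝ≥0∞}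

theorem aestronglyMeasurable_clm_apply [NontriviallyNormedField 𝕜] [NormedSpace 𝕜 E]
    [NormedSpace 𝕜 F] {V : α → E →L[𝕜] F} {f : α → E}
    (hV : ∀ x, AEStronglyMeasurable (fun a => V a x) μ) (hf : AEStronglyMeasurable f μ) :
    AEStronglyMeasurable (fun a => V a (f a)) μ := by
  have hsimple (g : SimpleFunc α E) : AEStronglyMeasurable (fun a => V a (g a)) μ := by
    induction g using SimpleFunc.induction with
    | @const x s hs =>
      refine ((hV x).indicator hs).congr (ae_of_all _ fun a => ?_)
      by_cases ha : a ∈ s <;> simp [ha]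
    | add _ hg hh => exact (hg.add hh).congr (ae_of_all _ fun a => by simp)
  obtain ⟨g, hg, hfg⟩ := hf
  refine AEStronglyMeasurable.congr ?_ (hfg.mono fun a ha => congrArg (V a) ha.symm)
  exact aestronglyMeasurable_of_tendsto_ae atTop (fun n => hsimple (hg.approx n))
    (ae_of_all _ fun a => ((V a).continuous.tendsto _).comp (hg.tendsto_approx a))

theorem tendsto_eLpNorm_sub_of_dominated {l : Filter ι} [l.IsCountablyGenerated]
    {u : ι → α → E} {v : α → E} {g : α → ℝ} (hp : p ≠ ∞) (hg : MemLp g p μ)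
    (hu : ∀ᶠ i in l, AEStronglyMeasurable (u i) μ) (hv : AEStronglyMeasurable v μ)
    (hug : ∀ᶠ i in l, ∀ᵐ a ∂μ, ‖u i a‖ ≤ g a) (hvg : ∀ᵐ a ∂μ, ‖v a‖ ≤ g a)
    (huv : ∀ᵐ a ∂μ, Tendsto (fun i => u i a) l (𝓝 (v a))) :
    Tendsto (fun i => eLpNorm (u i - v) p μ) l (𝓝 0) := by
  rcases eq_or_ne p 0 with rfl | hp0
  · simpa using tendsto_const_nhds
  have hpr : 0 < p.toReal := ENNReal.toReal_pos hp0 hp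
  have hint : Tendsto (fun i => ∫⁻ a, ‖(u i - v) a‖ₑ ^ p.toReal ∂μ) l (𝓝 (∫⁻ _, 0 ∂μ)) := by
    refine tendsto_lintegral_filter_of_dominated_convergence'
      (fun a => ‖((2 : ℝ) • g) a‖ₑ ^ p.toReal) ?_ ?_ ?_ ?_
    · filter_upwards [hu] with i hi using (hi.sub hv).enorm.pow_const _
    · filter_upwards [hug] with i hi
      filter_upwards [hi, hvg] with a hia hva
      gcongr
      rw [enorm_le_iff_norm_le, Pi.sub_apply, Pi.smul_apply, smul_eq_mul]
      exact (norm_sub_le _ _).trans (le_trans (by linarith) (le_abs_self _))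
    · exact (lintegral_rpow_enorm_lt_top_of_eLpNorm_lt_top hp0 hp
        (hg.const_smul (2 : ℝ)).eLpNorm_lt_top).ne
    · filter_upwards [huv] with a ha
      have hsub : Tendsto (fun i => u i a - v a) l (𝓝 0) := by simpa using ha.sub_const (v a)
      simpa [ENNReal.zero_rpow_of_pos hpr] using hsub.enorm.ennrpow_const p.toReal
  simp only [eLpNorm_eq_lintegral_rpow_enorm_toReal hp0 hp]
  simpa [ENNReal.zero_rpow_of_pos (inv_pos.2 hpr)] using hint.ennrpow_const (1 / p.toReal)

theorem dense_toLp_continuous_hasCompactSupport [NormedSpace ℝ E] [TopologicalSpace α]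
    [NormalSpace α] [R1Space α]
    [WeaklyLocallyCompactSpace α] [BorelSpace α] [μ.Regular] [Fact (1 ≤ p)]
    (hp : p ≠ ∞) :
    Dense {f : Lp E p μ | ∃ (g : α → E) (hg : MemLp g p μ),
      Continuous g ∧ HasCompactSupport g ∧ hg.toLp g = f} := by
  refine Metric.dense_iff.2 fun f r hr => ?_
  obtain ⟨g, hsupp, hfg, hcont, hg⟩ := (Lp.memLp f).exists_hasCompactSupport_eLpNorm_sub_le hp
    (ε := ENNReal.ofReal (r / 2)) (by simpa using hr)
  refine ⟨hg.toLp g, ?_, g, hg, hcont, hsupp, rfl⟩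
  rw [Metric.mem_ball, dist_comm, Lp.dist_def]
  calc (eLpNorm (⇑f - ⇑(hg.toLp g)) p μ).toReal = (eLpNorm (⇑f - g) p μ).toReal := by
        rw [eLpNorm_congr_ae (EventuallyEq.rfl.sub hg.coeFn_toLp)]
    _ ≤ r / 2 := ENNReal.toReal_le_of_le_ofReal (by positivity) hfg
    _ < r := half_lt_self hr

variable [NontriviallyNormedField 𝕜] [NormedSpace 𝕜 E] [NormedSpace 𝕜 F]
  {Φ : (α → E) →ₗ[𝕜] (β → F)} {c : ℝ}

theorem linearMap_ae_eq_of_eLpNorm_le (hp : p ≠ 0) (hmem : ∀ f, MemLp f p μ → MemLp (Φ f) p ν)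
    (hle : ∀ f, MemLp f p μ → eLpNorm (Φ f) p ν ≤ ENNReal.ofReal c * eLpNorm f p μ)
    {f g : α → E} (hf : MemLp f p μ) (hg : MemLp g p μ) (hfg : f =ᵐ[μ] g) : Φ f =ᵐ[ν] Φ g := by
  have hfg_zero : eLpNorm (f - g) p μ = 0 := by
    rw [eLpNorm_congr_ae hfg.sub_eq, eLpNorm_zero]
  have hΦ_zero : eLpNorm (Φ f - Φ g) p ν = 0 := by
    simpa [hfg_zero] using hle _ (hf.sub hg)
  rw [eLpNorm_eq_zero_iff ((hmem f hf).sub (hmem g hg)).1 hp] at hΦ_zero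
  exact hΦ_zero.mono fun b hb => sub_eq_zero.1 hb

theorem exists_clm_Lp_of_eLpNorm_le [Fact (1 ≤ p)] (hc : 0 ≤ c)
    (hmem : ∀ f, MemLp f p μ → MemLp (Φ f) p ν)
    (hle : ∀ f, MemLp f p μ → eLpNorm (Φ f) p ν ≤ ENNReal.ofReal c * eLpNorm f p μ) :
    ∃ T : Lp E p μ →L[𝕜] Lp F p ν, ‖T‖ ≤ c ∧
      ∀ (f : α → E) (hf : MemLp f p μ), T (hf.toLp f) =ᵐ[ν] Φ f := by
  have hcongr {f g : α → E} (hf : MemLp f p μ) (hg : MemLp g p μ) (hfg : f =ᵐ[μ] g) :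
      Φ f =ᵐ[ν] Φ g :=
    linearMap_ae_eq_of_eLpNorm_le (zero_lt_one.trans_le Fact.out).ne' hmem hle hf hg hfg
  let L : Lp E p μ →ₗ[𝕜] Lp F p ν :=
    { toFun f := (hmem f (Lp.memLp f)).toLp _
      map_add' f g := by
        rw [← MemLp.toLp_add, MemLp.toLp_eq_toLp_iff, ← map_add]
        exact hcongr (Lp.memLp _) ((Lp.memLp f).add (Lp.memLp g)) (Lp.coeFn_add f g)
      map_smul' a f := by
        rw [RingHom.id_apply, ← MemLp.toLp_const_smul, MemLp.toLp_eq_toLp_iff, ← map_smul]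
        exact hcongr (Lp.memLp _) ((Lp.memLp f).const_smul a) (Lp.coeFn_smul a f) }
  have hL (f : Lp E p μ) : ‖L f‖ ≤ c * ‖f‖ := by
    have hmono := ENNReal.toReal_mono
      (ENNReal.mul_ne_top ENNReal.ofReal_ne_top (Lp.memLp f).2.ne) (hle f (Lp.memLp f))
    rw [ENNReal.toReal_mul, ENNReal.toReal_ofReal hc, ← Lp.norm_def] at hmono
    exact (Lp.norm_toLp _ (hmem f (Lp.memLp f))).trans_le hmono
  refine ⟨L.mkContinuous c hL, L.mkContinuous_norm_le hc hL, fun f hf => ?_⟩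
  exact (MemLp.coeFn_toLp (hmem _ (Lp.memLp (hf.toLp f)))).trans
    (hcongr (Lp.memLp _) hf hf.coeFn_toLp)

end Lp

section WeightedComp

variable {α β 𝕜 E F : Type*} [NontriviallyNormedField 𝕜]
  [NormedAddCommGroup E] [NormedSpace 𝕜 E] [NormedAddCommGroup F] [NormedSpace 𝕜 F]

/-- The weighted composition operator `f ↦ V · (f ∘ φ)` on functions `f` defined on the set `I`,
where `f` is understood to vanish off `I`: only its values on `I` enter. -/
noncomputable def weightedComp (I : Set β) (φ : α → β) (V : α → E →L[𝕜] F) :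
    (β → E) →ₗ[𝕜] (α → F) where
  toFun f := (φ ⁻¹' I).indicator fun a => V a (f (φ a))
  map_add' f g := by
    simp only [Pi.add_apply, map_add]
    exact indicator_add _ _ _
  map_smul' c f := by
    simp only [Pi.smul_apply, map_smul, RingHom.id_apply]
    exact indicator_const_smul _ c _

theorem weightedComp_apply (I : Set β) (φ : α → β) (V : α → E →L[𝕜] F) (f : β → E) :
    weightedComp I φ V f = (φ ⁻¹' I).indicator fun a => V a (f (φ a)) :=
  rfl

variable [MeasurableSpace α] [MeasurableSpace β] {μ : Measure α} {ν : Measure β} {I : Set β}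
  {J : Set α} {φ : α → β} {V : α → E →L[𝕜] F} {f : β → E} {p : ℝ≥0∞} {c : ℝ}

theorem aestronglyMeasurable_weightedComp (hφ : MeasurePreserving φ μ ν) (hI : MeasurableSet I)
    (hV : ∀ x, AEStronglyMeasurable (fun a => V a x) (μ.restrict (φ ⁻¹' I ∩ J)))
    (hf : AEStronglyMeasurable f (ν.restrict I)) :
    AEStronglyMeasurable (weightedComp I φ V f) (μ.restrict J) := by
  have hfφ : AEStronglyMeasurable (f ∘ φ) (μ.restrict (φ ⁻¹' I)) :=
    hf.comp_measurePreserving (hφ.restrict_preimage hI)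
  rw [weightedComp_apply, aestronglyMeasurable_indicator_iff (hφ.measurable hI),
    Measure.restrict_restrict (hφ.measurable hI)]
  exact aestronglyMeasurable_clm_apply hV
    (hfφ.mono_measure (Measure.restrict_mono inter_subset_left le_rfl))

theorem eLpNorm_weightedComp_le (hφ : MeasurePreserving φ μ ν) (hI : MeasurableSet I)
    (hV : ∀ᵐ a ∂μ.restrict (φ ⁻¹' I ∩ J), ‖V a‖ ≤ c)
    (hf : AEStronglyMeasurable f (ν.restrict I)) :
    eLpNorm (weightedComp I φ V f) p (μ.restrict J) ≤
      ENNReal.ofReal c * eLpNorm f p (ν.restrict I) := by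
  calc eLpNorm (weightedComp I φ V f) p (μ.restrict J)
      = eLpNorm (fun a => V a (f (φ a))) p (μ.restrict (φ ⁻¹' I ∩ J)) := by
        rw [weightedComp_apply, eLpNorm_indicator_eq_eLpNorm_restrict (hφ.measurable hI),
          Measure.restrict_restrict (hφ.measurable hI)]
    _ ≤ ENNReal.ofReal c * eLpNorm (f ∘ φ) p (μ.restrict (φ ⁻¹' I ∩ J)) :=
        eLpNorm_le_mul_eLpNorm_of_ae_le_mul
          (hV.mono fun a ha => (V a).le_of_opNorm_le ha (f (φ a))) p
    _ ≤ ENNReal.ofReal c * eLpNorm (f ∘ φ) p (μ.restrict (φ ⁻¹' I)) := by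
        gcongr
        exact inter_subset_left
    _ = ENNReal.ofReal c * eLpNorm f p (ν.restrict I) := by
        rw [eLpNorm_comp_measurePreserving hf (hφ.restrict_preimage hI)]

end WeightedComp

section Propagator

open scoped Pointwise

variable {𝕜 X : Type*} [NontriviallyNormedField 𝕜] [NormedAddCommGroup X] [NormedSpace 𝕜 X]

/-- A strongly continuous propagator on `I`, exponentially bounded with constants `M` and `ω`. The
operators `U t s` are constrained only for `t ≥ s` in `I`. -/
structure IsPropagator (I : Set ℝ) (U : ℝ → ℝ → X →L[𝕜] X) (M ω : ℝ) : Prop where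
  self_eq_one : ∀ t ∈ I, U t t = 1
  comp_eq : ∀ t ∈ I, ∀ r ∈ I, ∀ s ∈ I, s ≤ r → r ≤ t → (U t r).comp (U r s) = U t s
  continuousOn : ∀ x : X, ContinuousOn (fun q : ℝ × ℝ => U q.1 q.2 x)
    {q : ℝ × ℝ | q.1 ∈ I ∧ q.2 ∈ I ∧ q.2 ≤ q.1}
  norm_le : ∀ t ∈ I, ∀ s ∈ I, s ≤ t → ‖U t s‖ ≤ M * exp (ω * (t - s))

/-- The evolution operator `(T(σ)f)(t) = U(t, t - σ) f(t - σ)`, extended by `0` where `t - σ ∉ I`,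
acting on functions rather than on their classes in `L^p`. -/
noncomputable def evolutionMap (I : Set ℝ) (U : ℝ → ℝ → X →L[𝕜] X) (σ : ℝ) :
    (ℝ → X) →ₗ[𝕜] (ℝ → X) :=
  weightedComp I (fun t => t - σ) fun t => U t (t - σ)

theorem evolutionMap_apply (I : Set ℝ) (U : ℝ → ℝ → X →L[𝕜] X) (σ : ℝ) (f : ℝ → X) (t : ℝ) :
    evolutionMap I U σ f t = if t - σ ∈ I then U t (t - σ) (f (t - σ)) else 0 :=
  indicator_apply ((fun t => t - σ) ⁻¹' I) (fun t => U t (t - σ) (f (t - σ))) t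

theorem eventually_mul_exp_le_add_one (M ω σ₀ : ℝ) :
    ∀ᶠ σ in 𝓝 σ₀, M * exp (ω * σ) ≤ M * exp (ω * σ₀) + 1 :=
  (Continuous.tendsto (f := fun σ => M * exp (ω * σ)) (by fun_prop) σ₀).eventually_le_const
    (lt_add_one _)

namespace IsPropagator

variable {I : Set ℝ} {U : ℝ → ℝ → X →L[𝕜] X} {M ω σ σ₀ t : ℝ} {f : ℝ → X} {p : ℝ≥0∞}

theorem norm_apply_sub_le (hU : IsPropagator I U M ω) (hσ : 0 ≤ σ) (ht : t ∈ I)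
    (htσ : t - σ ∈ I) : ‖U t (t - σ)‖ ≤ M * exp (ω * σ) := by
  simpa using hU.norm_le t ht (t - σ) htσ (sub_le_self t hσ)

theorem evolutionMap_zero_eqOn (hU : IsPropagator I U M ω) (f : ℝ → X) :
    EqOn (evolutionMap I U 0 f) f I := fun t ht => by
  simp [evolutionMap_apply, ht, hU.self_eq_one t ht]

theorem evolutionMap_add_eqOn (hU : IsPropagator I U M ω) (hI : I.OrdConnected) {σ τ : ℝ}
    (hσ : 0 ≤ σ) (hτ : 0 ≤ τ) (f : ℝ → X) :
    EqOn (evolutionMap I U (σ + τ) f) (evolutionMap I U σ (evolutionMap I U τ f)) I := by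
  intro t ht
  simp only [evolutionMap_apply, sub_sub]
  by_cases hs : t - (σ + τ) ∈ I
  · have hr : t - σ ∈ I := hI.out hs ht ⟨by linarith, by linarith⟩
    rw [if_pos hs, if_pos hr, if_pos hs,
      ← hU.comp_eq t ht (t - σ) hr (t - (σ + τ)) hs (by linarith) (by linarith),
      ContinuousLinearMap.comp_apply]
  · simp [hs]

theorem aestronglyMeasurable_evolutionMap (hU : IsPropagator I U M ω) (hI : MeasurableSet I)
    (hσ : 0 ≤ σ) (hf : AEStronglyMeasurable f (volume.restrict I)) :
    AEStronglyMeasurable (evolutionMap I U σ f) (volume.restrict I) := by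
  refine aestronglyMeasurable_weightedComp (measurePreserving_sub_right volume σ) hI
    (fun x => ?_) hf
  have hcont : ContinuousOn (fun t => U t (t - σ) x) ((fun t => t - σ) ⁻¹' I ∩ I) :=
    (hU.continuousOn x).comp (f := fun t => (t, t - σ)) (by fun_prop)
      fun t ht => ⟨ht.2, ht.1, sub_le_self t hσ⟩
  exact hcont.aestronglyMeasurable ((measurable_sub_const σ hI).inter hI)

theorem eLpNorm_evolutionMap_le (hU : IsPropagator I U M ω) (hI : MeasurableSet I)
    (hσ : 0 ≤ σ) (hf : AEStronglyMeasurable f (volume.restrict I)) :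
    eLpNorm (evolutionMap I U σ f) p (volume.restrict I) ≤
      ENNReal.ofReal (M * exp (ω * σ)) * eLpNorm f p (volume.restrict I) :=
  eLpNorm_weightedComp_le (measurePreserving_sub_right volume σ) hI
    (ae_restrict_of_forall_mem ((measurable_sub_const σ hI).inter hI)
      fun _ ht => hU.norm_apply_sub_le hσ ht.2 ht.1) hf

theorem memLp_evolutionMap (hU : IsPropagator I U M ω) (hI : MeasurableSet I) (hσ : 0 ≤ σ)
    (hf : MemLp f p (volume.restrict I)) :
    MemLp (evolutionMap I U σ f) p (volume.restrict I) :=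
  ⟨hU.aestronglyMeasurable_evolutionMap hI hσ hf.1,
    (hU.eLpNorm_evolutionMap_le hI hσ hf.1).trans_lt
      (ENNReal.mul_lt_top ENNReal.ofReal_lt_top hf.2)⟩

theorem exists_clm_Lp (hU : IsPropagator I U M ω) (hI : MeasurableSet I) (hM : 0 ≤ M)
    [Fact (1 ≤ p)] (hσ : 0 ≤ σ) :
    ∃ T : Lp X p (volume.restrict I) →L[𝕜] Lp X p (volume.restrict I),
      ‖T‖ ≤ M * exp (ω * σ) ∧ ∀ (f : ℝ → X) (hf : MemLp f p (volume.restrict I)),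
        T (hf.toLp f) =ᵐ[volume.restrict I] evolutionMap I U σ f :=
  exists_clm_Lp_of_eLpNorm_le (by positivity)
    (fun _ hf => hU.memLp_evolutionMap hI hσ hf)
    (fun _ hf => hU.eLpNorm_evolutionMap_le hI hσ hf.1)

theorem tendsto_evolutionMap_apply_of_mem_interior (hU : IsPropagator I U M ω)
    (hf : Continuous f) (hσ₀ : 0 ≤ σ₀) (ht : t ∈ I) (hint : t - σ₀ ∈ interior I) :
    Tendsto (fun σ => evolutionMap I U σ f t) (𝓝[Ici 0] σ₀) (𝓝 (evolutionMap I U σ₀ f t)) := by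
  have hsub : Tendsto (fun σ => t - σ) (𝓝[Ici 0] σ₀) (𝓝 (t - σ₀)) :=
    (Continuous.tendsto (by fun_prop) σ₀).mono_left nhdsWithin_le_nhds
  have hmem : ∀ᶠ σ in 𝓝[Ici 0] σ₀, t - σ ∈ I := hsub (mem_interior_iff_mem_nhds.1 hint)
  have hmem₀ : t - σ₀ ∈ I := interior_subset hint
  have hnonneg : ∀ᶠ σ in 𝓝[Ici 0] σ₀, 0 ≤ σ := eventually_mem_nhdsWithin
  have hbound : ∀ᶠ σ in 𝓝[Ici 0] σ₀, ‖U t (t - σ)‖ ≤ M * exp (ω * σ₀) + 1 := by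
    filter_upwards [hnonneg, hmem, nhdsWithin_le_nhds (eventually_mul_exp_le_add_one M ω σ₀)]
      with σ hσ htσ hle using (hU.norm_apply_sub_le hσ ht htσ).trans hle
  have hstrong : Tendsto (fun σ => U t (t - σ) (f (t - σ₀))) (𝓝[Ici 0] σ₀)
      (𝓝 (U t (t - σ₀) (f (t - σ₀)))) := by
    refine (hU.continuousOn (f (t - σ₀)) (t, t - σ₀) ⟨ht, hmem₀, sub_le_self t hσ₀⟩).tendsto.comp
      (tendsto_nhdsWithin_iff.2 ⟨tendsto_const_nhds.prodMk_nhds hsub, ?_⟩)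
    filter_upwards [hnonneg, hmem] with σ hσ htσ using ⟨ht, htσ, sub_le_self t hσ⟩
  rw [evolutionMap_apply, if_pos hmem₀]
  refine (tendsto_clm_apply_of_eventually_norm_le hbound
    ((hf.tendsto _).comp hsub) hstrong).congr' ?_
  filter_upwards [hmem] with σ htσ
  rw [evolutionMap_apply, if_pos htσ, Function.comp_apply]

theorem tendsto_evolutionMap_apply (hU : IsPropagator I U M ω) (hf : Continuous f)
    (hσ₀ : 0 ≤ σ₀) (ht : t ∈ I) (hfr : t - σ₀ ∉ frontier I) :
    Tendsto (fun σ => evolutionMap I U σ f t) (𝓝[Ici 0] σ₀) (𝓝 (evolutionMap I U σ₀ f t)) := by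
  rw [← mem_compl_iff, compl_frontier_eq_union_interior] at hfr
  rcases hfr with hint | hext
  · exact hU.tendsto_evolutionMap_apply_of_mem_interior hf hσ₀ ht hint
  · have hnotMem : ∀ᶠ σ in 𝓝 σ₀, t - σ ∉ I :=
      (Continuous.tendsto (f := fun σ => t - σ) (by fun_prop) σ₀)
        (mem_interior_iff_mem_nhds.1 hext)
    have hzero : ∀ᶠ σ in 𝓝 σ₀, evolutionMap I U σ f t = 0 :=
      hnotMem.mono fun σ hσ => by rw [evolutionMap_apply, if_neg hσ]
    rw [hzero.self_of_nhds]
    exact (tendsto_nhds_of_eventually_eq hzero).mono_left nhdsWithin_le_nhds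

theorem norm_evolutionMap_le_indicator (hU : IsPropagator I U M ω) {S : Set ℝ} {C K : ℝ}
    (hK : ∀ x, ‖f x‖ ≤ K) (hC : 0 ≤ C) (hMC : M * exp (ω * σ) ≤ C) (hσ : 0 ≤ σ) (hσS : σ ∈ S)
    (ht : t ∈ I) :
    ‖evolutionMap I U σ f t‖ ≤ (tsupport f + S).indicator (fun _ => C * K) t := by
  have hK0 : 0 ≤ K := (norm_nonneg _).trans (hK 0)
  have hnonneg : 0 ≤ (tsupport f + S).indicator (fun _ => C * K) t :=
    indicator_nonneg (fun _ _ => mul_nonneg hC hK0) t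
  rw [evolutionMap_apply]
  split_ifs with htσ
  · by_cases hsupp : t - σ ∈ tsupport f
    · rw [indicator_of_mem (by simpa using add_mem_add hsupp hσS)]
      exact (U t (t - σ)).le_of_opNorm_le_of_le ((hU.norm_apply_sub_le hσ ht htσ).trans hMC) (hK _)
    · simpa [image_eq_zero_of_notMem_tsupport hsupp] using hnonneg
  · simpa using hnonneg

theorem tendsto_eLpNorm_evolutionMap_sub (hU : IsPropagator I U M ω) (hI : I.OrdConnected)
    (hM : 0 ≤ M) (hp : p ≠ ∞) (hf : Continuous f) (hfs : HasCompactSupport f) (hσ₀ : 0 ≤ σ₀) :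
    Tendsto (fun σ => eLpNorm (evolutionMap I U σ f - evolutionMap I U σ₀ f) p
      (volume.restrict I)) (𝓝[Ici 0] σ₀) (𝓝 0) := by
  have hImeas : MeasurableSet I := hI.measurableSet
  have hmeas {σ : ℝ} (hσ : 0 ≤ σ) :
      AEStronglyMeasurable (evolutionMap I U σ f) (volume.restrict I) :=
    hU.aestronglyMeasurable_evolutionMap hImeas hσ hf.aestronglyMeasurable
  obtain ⟨K, hK⟩ := hf.bounded_above_of_compact_support hfs
  set C := M * exp (ω * σ₀) + 1
  set B := tsupport f + Metric.closedBall σ₀ 1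
  have hB : IsCompact B := hfs.isCompact.add (isCompact_closedBall σ₀ 1)
  have hdom {σ : ℝ} (hσ : 0 ≤ σ) (hσC : M * exp (ω * σ) ≤ C) (hσS : σ ∈ Metric.closedBall σ₀ 1) :
      ∀ᵐ t ∂volume.restrict I, ‖evolutionMap I U σ f t‖ ≤ B.indicator (fun _ => C * K) t :=
    ae_restrict_of_forall_mem hImeas fun t ht =>
      hU.norm_evolutionMap_le_indicator hK (by positivity) hσC hσ hσS ht
  have hB_memLp : MemLp (B.indicator fun _ => C * K) p (volume.restrict I) :=
    memLp_indicator_const p hB.measurableSet _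
      (.inr ((Measure.restrict_le_self B).trans_lt hB.measure_lt_top).ne)
  have hnonneg : ∀ᶠ σ in 𝓝[Ici 0] σ₀, 0 ≤ σ := eventually_mem_nhdsWithin
  have hfrontier : ∀ᵐ t : ℝ, t - σ₀ ∉ frontier I :=
    (measurePreserving_sub_right volume σ₀).quasiMeasurePreserving.ae
      (measure_eq_zero_iff_ae_notMem.1 (hI.convex.addHaar_frontier volume))
  refine tendsto_eLpNorm_sub_of_dominated hp hB_memLp (hnonneg.mono fun σ hσ => hmeas hσ)
    (hmeas hσ₀) ?_ (hdom hσ₀ (by simp [C]) (by simp)) ?_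
  · filter_upwards [hnonneg, nhdsWithin_le_nhds (eventually_mul_exp_le_add_one M ω σ₀),
      nhdsWithin_le_nhds (Metric.closedBall_mem_nhds σ₀ one_pos)] with σ hσ hσC hσS
      using hdom hσ hσC hσS
  · filter_upwards [ae_restrict_of_ae hfrontier, ae_restrict_mem hImeas] with t hfr ht
    exact hU.tendsto_evolutionMap_apply hf hσ₀ ht hfr

theorem continuousOn_of_ae_eq_evolutionMap [NormedSpace ℝ X] (hU : IsPropagator I U M ω)
    (hI : I.OrdConnected) (hM : 0 ≤ M) [Fact (1 ≤ p)] (hp : p ≠ ∞)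
    {T : ℝ → Lp X p (volume.restrict I) →L[𝕜] Lp X p (volume.restrict I)}
    (hT_norm : ∀ σ, 0 ≤ σ → ‖T σ‖ ≤ M * exp (ω * σ))
    (hT : ∀ σ, 0 ≤ σ → ∀ (f : ℝ → X) (hf : MemLp f p (volume.restrict I)),
      T σ (hf.toLp f) =ᵐ[volume.restrict I] evolutionMap I U σ f)
    (f : Lp X p (volume.restrict I)) : ContinuousOn (fun σ => T σ f) (Ici 0) := by
  intro σ₀ hσ₀
  have hnonneg : ∀ᶠ σ in 𝓝[Ici 0] σ₀, 0 ≤ σ := eventually_mem_nhdsWithin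
  have hbound : ∀ᶠ σ in 𝓝[Ici 0] σ₀, ‖T σ‖ ≤ M * exp (ω * σ₀) + 1 := by
    filter_upwards [hnonneg, nhdsWithin_le_nhds (eventually_mul_exp_le_add_one M ω σ₀)]
      with σ hσ hle using (hT_norm σ hσ).trans hle
  refine tendsto_clm_apply_of_dense (dense_toLp_continuous_hasCompactSupport hp) hbound ?_ f
  rintro _ ⟨g, hg, hcont, hsupp, rfl⟩
  refine (Lp.tendsto_Lp_iff_tendsto_eLpNorm' _ _).2 ?_
  refine (hU.tendsto_eLpNorm_evolutionMap_sub hI hM hp hcont hsupp hσ₀).congr' ?_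
  filter_upwards [hnonneg] with σ hσ
  exact eLpNorm_congr_ae ((hT σ hσ g hg).sub (hT σ₀ hσ₀ g hg)).symm

end IsPropagator

theorem evolution_semigroup_exists_general [NormedSpace ℝ X] {I : Set ℝ} (hI : I.OrdConnected)
    {M ω : ℝ} (hM : 0 ≤ M) {U : ℝ → ℝ → X →L[𝕜] X} (hU : IsPropagator I U M ω)
    {p : ℝ≥0∞} [Fact (1 ≤ p)] (hp : p ≠ ∞) :
    ∃ T : ℝ → (Lp X p (volume.restrict I) →L[𝕜] Lp X p (volume.restrict I)),
      (∀ σ : ℝ, 0 ≤ σ → ∀ f : Lp X p (volume.restrict I),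
        ⇑(T σ f) =ᵐ[volume.restrict I]
          fun t => if t - σ ∈ I then U t (t - σ) (f (t - σ)) else 0) ∧
      T 0 = 1 ∧
      (∀ σ τ : ℝ, 0 ≤ σ → 0 ≤ τ → T (σ + τ) = (T σ).comp (T τ)) ∧
      (∀ f : Lp X p (volume.restrict I), ContinuousOn (fun σ => T σ f) (Ici (0 : ℝ))) ∧
      (∀ σ : ℝ, 0 ≤ σ → ‖T σ‖ ≤ M * exp (ω * σ)) := by
  have hImeas : MeasurableSet I := hI.measurableSet
  choose! T hT_norm hT using fun (σ : ℝ) (hσ : 0 ≤ σ) => hU.exists_clm_Lp (p := p) hImeas hM hσ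
  have hT_coe (σ : ℝ) (hσ : 0 ≤ σ) (f : Lp X p (volume.restrict I)) :
      T σ f =ᵐ[volume.restrict I] evolutionMap I U σ f := by
    simpa only [Lp.toLp_coeFn] using hT σ hσ f (Lp.memLp f)
  refine ⟨T, fun σ hσ f => ?_, ?_, fun σ τ hσ hτ => ?_,
    hU.continuousOn_of_ae_eq_evolutionMap hI hM hp hT_norm hT, hT_norm⟩
  · exact (hT_coe σ hσ f).trans (.of_eq (funext (evolutionMap_apply I U σ f)))
  · ext1 f
    exact Lp.ext ((hT_coe 0 le_rfl f).trans
      ((hU.evolutionMap_zero_eqOn f).aeEq_restrict hImeas))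
  · ext1 f
    have hTτ : T τ f = (hU.memLp_evolutionMap hImeas hτ (Lp.memLp f)).toLp _ :=
      Lp.ext ((hT_coe τ hτ f).trans (MemLp.coeFn_toLp _).symm)
    rw [ContinuousLinearMap.comp_apply, hTτ]
    exact Lp.ext ((hT_coe _ (add_nonneg hσ hτ) f).trans
      (((hU.evolutionMap_add_eqOn hI hσ hτ f).aeEq_restrict hImeas).trans (hT σ hσ _ _).symm))

end Propagator

/-- **Existence of the evolution semigroup on `L^p(I,X)`.**
Given a strongly continuous, exponentially bounded propagator `U(t,s)` on the
interval `I` with constants `M ≥ 1`, `ω`, the formula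
`(T σ f)(t) = U t (t-σ) (f (t-σ))` (and `0` if `t - σ ∉ I`) defines, for
`1 ≤ p < ∞`, a strongly continuous semigroup of bounded operators on
`L^p(I,X)` with `‖T σ‖ ≤ M e^{ω σ}`. -/
theorem evolution_semigroup_exists
    {X : Type*} [NormedAddCommGroup X] [NormedSpace ℝ X] [CompleteSpace X]
    (I : Set ℝ) (hI : I.OrdConnected) (hImeas : MeasurableSet I)
    (M ω : ℝ) (hM : 1 ≤ M)
    (U : ℝ → ℝ → X →L[ℝ] X)
    (hU_id : ∀ t ∈ I, U t t = 1)
    (hU_comp : ∀ t ∈ I, ∀ r ∈ I, ∀ s ∈ I, s ≤ r → r ≤ t →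
      (U t r).comp (U r s) = U t s)
    (hU_cont : ∀ x : X, ContinuousOn (fun q : ℝ × ℝ => U q.1 q.2 x)
      {q : ℝ × ℝ | q.1 ∈ I ∧ q.2 ∈ I ∧ q.2 ≤ q.1})
    (hU_bound : ∀ t ∈ I, ∀ s ∈ I, s ≤ t → ‖U t s‖ ≤ M * exp (ω * (t - s)))
    (p : ℝ≥0∞) [Fact (1 ≤ p)] (hp : p ≠ ∞) :
    ∃ T : ℝ → (Lp X p (volume.restrict I) →L[ℝ] Lp X p (volume.restrict I)),
      -- the defining pointwise (a.e.) formula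
      (∀ σ : ℝ, 0 ≤ σ → ∀ f : Lp X p (volume.restrict I),
        ⇑(T σ f) =ᵐ[volume.restrict I]
          fun t => if t - σ ∈ I then U t (t - σ) (f (t - σ)) else 0) ∧
      -- semigroup property
      T 0 = 1 ∧
      (∀ σ τ : ℝ, 0 ≤ σ → 0 ≤ τ → T (σ + τ) = (T σ).comp (T τ)) ∧
      -- strong continuity
      (∀ f : Lp X p (volume.restrict I),
        ContinuousOn (fun σ => T σ f) (Ici (0:ℝ))) ∧
      -- exponential bound
      (∀ σ : ℝ, 0 ≤ σ → ‖T σ‖ ≤ M * exp (ω * σ)) := by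
  exact evolution_semigroup_exists_general hI (zero_le_one.trans hM)
    ⟨hU_id, hU_comp, hU_cont, hU_bound⟩ hp
end

section
/- Let T(·) be an evolution semigroup with generator G on E_p = L^p(ℝ,X) (respectively C_0(ℝ,X) if p = ∞), 1 ≤ p ≤ ∞, with time interval I = ℝ. Let D be a core for G such that φf ∈ D for all f ∈ D and all φ ∈ C¹_c(ℝ). Then D_c = D ∩ C_c(ℝ,X) is also a core for G. Moreover, if f ∈ D(G) ∩ C_c(ℝ,X), then f can be approximated in the graph norm of G by functions f_n ∈ D_c whose supports are all contained in one fixed bounded interval J ⊇ supp f. -/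
open MeasureTheory Set Real Filter
open scoped ENNReal Topology

/-!
Integrating the derivative of `(1 - τ) T(τ) f` over `[0, 1]` gives, for `f` in the domain of `G`,
`f = ∫₀¹ T(τ) f dτ - ∫₀¹ (1 - τ) T(τ) G f dτ`. Evaluated at almost every `t`, the integrals on the
right become Volterra integrals over `[t - 1, t]` of a locally integrable function against a
strongly continuous operator kernel built from the propagator, and such integrals are continuous
in `t`. Hence every element of the domain of `G` has a continuous representative.

It remains to cut off. Let `c` be a smooth cutoff at scale `R`, so that `G (c d) = c G d - c' d`.
For `d ∈ D` the products `c d` have continuous compactly supported representatives and tend to `d`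
in the graph norm as `R → ∞`, because `‖c'‖ = O(1 / R)`. If `f` is supported in `[-R, R]` then
`c f = f`, and multiplication by `c` is bounded in the graph norm, so for `d ∈ D` close to `f` the
product `c d`, supported in `[-2R, 2R]`, is still close to `c f = f`.
-/

section LpCurves

variable {α β E : Type*} [MeasurableSpace α] [MeasurableSpace β] [NormedAddCommGroup E]
  {μ : Measure α} {ν : Measure β}

theorem integrable_uncurry_of_integrable_L1 [SFinite μ] {Φ : β → Lp E 1 μ} (hΦ : Integrable Φ ν)
    {F : β → α → E} (hF : AEStronglyMeasurable (Function.uncurry F) (ν.prod μ))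
    (hΦF : ∀ᵐ b ∂ν, Φ b =ᵐ[μ] F b) : Integrable (Function.uncurry F) (ν.prod μ) := by
  refine (integrable_prod_iff hF).2 ⟨?_, hΦ.norm.congr ?_⟩
  · filter_upwards [hΦF] with b hb using (L1.integrable_coeFn (Φ b)).congr hb
  · filter_upwards [hΦF] with b hb
    rw [L1.norm_eq_integral_norm]
    exact integral_congr_ae (hb.fun_comp norm)

variable [NormedSpace ℝ E]

theorem exists_clm_L1_restrict_ae_eq (p : ℝ≥0∞) [Fact (1 ≤ p)] {s : Set α} (hs : μ s < ∞) :
    ∃ R : Lp E p μ →L[ℝ] Lp E 1 (μ.restrict s), ∀ f, R f =ᵐ[μ.restrict s] f := by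
  have := isFiniteMeasure_restrict.2 hs.ne
  have := (ENNReal.HolderConjugate.conjExponent (Fact.out : 1 ≤ p)).symm
  have : Fact (1 ≤ p.conjExponent) := ⟨ENNReal.HolderConjugate.one_le _ p⟩
  obtain ⟨one, hone⟩ : ∃ one : Lp ℝ p.conjExponent (μ.restrict s), one =ᵐ[μ.restrict s] 1 :=
    ⟨_, Lp.coeFn_const p.conjExponent (μ.restrict s) 1⟩
  refine ⟨(ContinuousLinearMap.lsmul ℝ ℝ).holderL (μ.restrict s) p.conjExponent p 1 one ∘L
    LpToLpRestrictCLM α E ℝ μ p s, fun f => ?_⟩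
  filter_upwards [ContinuousLinearMap.coeFn_holder (r := 1) (ContinuousLinearMap.lsmul ℝ ℝ) one
    (LpToLpRestrictCLM α E ℝ μ p s f), hone, LpToLpRestrictCLM_coeFn ℝ s f]
    with a hsmul hone hrestrict
  refine hsmul.trans ?_
  rw [ContinuousLinearMap.lsmul_apply, hone, hrestrict, Pi.one_apply, one_smul]

variable [CompleteSpace E]

theorem setIntegral_integral_L1 {Φ : β → Lp E 1 μ} (hΦ : Integrable Φ ν) (s : Set α) :
    ∫ a in s, (∫ b, Φ b ∂ν : Lp E 1 μ) a ∂μ = ∫ b, ∫ a in s, Φ b a ∂μ ∂ν := by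
  let L : Lp E 1 μ →L[ℝ] E := L1.integralCLM ∘L LpToLpRestrictCLM α E ℝ μ 1 s
  have hL (f : Lp E 1 μ) : L f = ∫ a in s, f a ∂μ :=
    (L1.integral_eq _).symm.trans <| (L1.integral_eq_integral _).trans <|
      integral_congr_ae (LpToLpRestrictCLM_coeFn ℝ s f)
  simpa only [hL] using (L.integral_comp_comm hΦ).symm

theorem coeFn_integral_L1_ae_eq [SFinite μ] [SFinite ν] {Φ : β → Lp E 1 μ} (hΦ : Integrable Φ ν)
    {F : β → α → E} (hF : AEStronglyMeasurable (Function.uncurry F) (ν.prod μ))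
    (hΦF : ∀ᵐ b ∂ν, Φ b =ᵐ[μ] F b) :
    ⇑(∫ b, Φ b ∂ν) =ᵐ[μ] fun a => ∫ b, F b a ∂ν := by
  have hFint := integrable_uncurry_of_integrable_L1 hΦ hF hΦF
  refine (L1.integrable_coeFn _).ae_eq_of_forall_setIntegral_eq _ _ hFint.integral_prod_right
    fun s _ _ => ?_
  calc ∫ a in s, (∫ b, Φ b ∂ν : Lp E 1 μ) a ∂μ
      = ∫ b, ∫ a in s, Φ b a ∂μ ∂ν := setIntegral_integral_L1 hΦ s
    _ = ∫ b, ∫ a in s, F b a ∂μ ∂ν := integral_congr_ae <| by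
        filter_upwards [hΦF] with b hb using integral_congr_ae (ae_restrict_of_ae hb)
    _ = ∫ a in s, ∫ b, F b a ∂ν ∂μ := integral_integral_swap <|
        hFint.mono_measure (Measure.prod_mono le_rfl Measure.restrict_le_self)

theorem coeFn_integral_Lp_ae_eq [SigmaFinite μ] [SFinite ν] {p : ℝ≥0∞} [Fact (1 ≤ p)]
    {Φ : β → Lp E p μ} (hΦ : Integrable Φ ν)
    {F : β → α → E} (hF : AEStronglyMeasurable (Function.uncurry F) (ν.prod μ))
    (hΦF : ∀ᵐ b ∂ν, Φ b =ᵐ[μ] F b) :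
    ⇑(∫ b, Φ b ∂ν) =ᵐ[μ] fun a => ∫ b, F b a ∂ν := by
  refine ae_of_forall_measure_lt_top_ae_restrict _ fun s _ hs => ?_
  obtain ⟨R, hR⟩ := exists_clm_L1_restrict_ae_eq (E := E) p hs
  refine (hR _).symm.trans ?_
  rw [← R.integral_comp_comm hΦ]
  refine coeFn_integral_L1_ae_eq (R.integrable_comp hΦ)
    (hF.mono_measure (Measure.prod_mono le_rfl Measure.restrict_le_self)) ?_
  filter_upwards [hΦF] with b hb using (hR _).trans (ae_restrict_of_ae hb)

end LpCurves

section StronglyContinuous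

variable {α 𝕜 E F : Type*} [TopologicalSpace α] [NontriviallyNormedField 𝕜]
  [NormedAddCommGroup E] [NormedSpace 𝕜 E] [CompleteSpace E]
  [NormedAddCommGroup F] [NormedSpace 𝕜 F]

theorem exists_opNorm_le_of_isCompact {V : α → E →L[𝕜] F} (hV : ∀ x, Continuous fun a => V a x)
    {K : Set α} (hK : IsCompact K) : ∃ C, ∀ a ∈ K, ‖V a‖ ≤ C := by
  obtain ⟨C, hC⟩ := banach_steinhaus (g := fun a : K => V a) fun x => by
    obtain ⟨C, hC⟩ := hK.exists_bound_of_continuousOn (hV x).continuousOn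
    exact ⟨C, fun a => hC a a.2⟩
  exact ⟨C, fun a ha => hC ⟨a, ha⟩⟩

theorem continuous_uncurry_apply_of_pointwise [WeaklyLocallyCompactSpace α] {V : α → E →L[𝕜] F}
    (hV : ∀ x, Continuous fun a => V a x) : Continuous fun q : α × E => V q.1 q.2 := by
  refine continuous_iff_continuousAt.2 fun ⟨a₀, x₀⟩ => ?_
  obtain ⟨K, hK, hKa₀⟩ := exists_compact_mem_nhds a₀
  obtain ⟨C, hC⟩ := exists_opNorm_le_of_isCompact hV hK
  have hfixed : Tendsto (fun q : α × E => V q.1 x₀) (𝓝 (a₀, x₀)) (𝓝 (V a₀ x₀)) :=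
    ((hV x₀).comp continuous_fst).tendsto (a₀, x₀)
  have hdiff : Tendsto (fun q : α × E => V q.1 (q.2 - x₀)) (𝓝 (a₀, x₀)) (𝓝 0) := by
    refine squeeze_zero_norm' (a := fun q => C * ‖q.2 - x₀‖) ?_ ?_
    · filter_upwards [continuous_fst.continuousAt.preimage_mem_nhds hKa₀] with q hq
      exact (V q.1).le_of_opNorm_le (hC _ hq) _
    · have hcont : Continuous fun q : α × E => C * ‖q.2 - x₀‖ := by fun_prop
      simpa using hcont.tendsto (a₀, x₀)
  simpa [ContinuousAt] using hdiff.add hfixed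

end StronglyContinuous

section Volterra

variable {E F : Type*} [NormedAddCommGroup E] [NormedSpace ℝ E] [CompleteSpace E]
  [NormedAddCommGroup F] [NormedSpace ℝ F] {K : ℝ × ℝ → E →L[ℝ] F} {u : ℝ → E}

theorem aestronglyMeasurable_kernel_apply (hK : ∀ x, Continuous fun q => K q x)
    (hu : AEStronglyMeasurable u volume) (t : ℝ) :
    AEStronglyMeasurable (fun s => K (t, s) (u s)) volume :=
  (continuous_uncurry_apply_of_pointwise hK).comp_aestronglyMeasurable
    ((Continuous.prodMk_right t).aestronglyMeasurable.prodMk hu)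

theorem intervalIntegrable_kernel_apply (hK : ∀ x, Continuous fun q => K q x)
    (hu : LocallyIntegrable u volume) (t a b : ℝ) :
    IntervalIntegrable (fun s => K (t, s) (u s)) volume a b := by
  obtain ⟨C, hC⟩ := exists_opNorm_le_of_isCompact hK
    ((isCompact_singleton (x := t)).prod (isCompact_uIcc (a := a) (b := b)))
  refine ((hu.integrableOn_isCompact isCompact_uIcc).intervalIntegrable.norm.const_mul C).mono_fun'
    (aestronglyMeasurable_kernel_apply hK hu.aestronglyMeasurable t).restrict ?_
  filter_upwards [ae_restrict_mem measurableSet_uIoc] with s hs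
  exact (K (t, s)).le_of_opNorm_le (hC (t, s) ⟨rfl, uIoc_subset_uIcc hs⟩) _

theorem continuous_kernel_primitive (hK : ∀ x, Continuous fun q => K q x)
    (hu : LocallyIntegrable u volume) (a : ℝ) :
    Continuous fun q : ℝ × ℝ => ∫ s in a..q.2, K (q.1, s) (u s) := by
  refine continuous_iff_continuousAt.2 fun ⟨t₀, b₀⟩ => ?_
  obtain ⟨c, hc⟩ := exists_lt (min a b₀)
  obtain ⟨d, hd⟩ := exists_gt (max a b₀)
  rw [lt_min_iff] at hc
  rw [max_lt_iff] at hd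
  obtain ⟨C, hC⟩ := exists_opNorm_le_of_isCompact hK
    ((isCompact_closedBall t₀ 1).prod (isCompact_uIcc (a := c) (b := d)))
  refine intervalIntegral.continuousAt_parametric_primitive_of_dominated
    (F := fun t s => K (t, s) (u s)) (fun s => C * ‖u s‖) c d
    (fun t => (aestronglyMeasurable_kernel_apply hK hu.aestronglyMeasurable t).restrict) ?_
    ((hu.integrableOn_isCompact isCompact_uIcc).intervalIntegrable.norm.const_mul C) ?_
    ⟨hc.1, hd.1⟩ ⟨hc.2, hd.2⟩ (measure_singleton _)
  · filter_upwards [Metric.closedBall_mem_nhds t₀ one_pos] with t ht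
    filter_upwards [ae_restrict_mem measurableSet_uIoc] with s hs
    exact (K (t, s)).le_of_opNorm_le (hC (t, s) ⟨ht, uIoc_subset_uIcc hs⟩) _
  · exact .of_forall fun s => ((hK (u s)).comp (Continuous.prodMk_left s)).continuousAt

theorem continuous_integral_kernel_window (hK : ∀ x, Continuous fun q => K q x)
    (hu : LocallyIntegrable u volume) (σ : ℝ) :
    Continuous fun t => ∫ s in (t - σ)..t, K (t, s) (u s) := by
  have hprim := continuous_kernel_primitive hK hu 0
  have hdiff : Continuous fun t : ℝ =>
      (∫ s in 0..t, K (t, s) (u s)) - ∫ s in 0..(t - σ), K (t, s) (u s) :=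
    (hprim.comp (continuous_id.prodMk continuous_id)).sub
      (hprim.comp (continuous_id.prodMk (continuous_sub_right σ)))
  refine hdiff.congr fun t => intervalIntegral.integral_interval_sub_left ?_ ?_ <;>
    exact intervalIntegrable_kernel_apply hK hu t _ _

end Volterra

section Semigroup

variable {Y : Type*} [NormedAddCommGroup Y] [NormedSpace ℝ Y] {T : ℝ → Y →L[ℝ] Y} {f h k : Y}

/-- `σ ↦ T σ`, `σ ≥ 0`, is a strongly continuous semigroup of bounded operators; the values at
`σ < 0` are irrelevant. -/
structure IsStronglyContinuousSemigroup (T : ℝ → Y →L[ℝ] Y) : Prop where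
  zero : T 0 = 1
  add : ∀ σ τ : ℝ, 0 ≤ σ → 0 ≤ τ → T (σ + τ) = (T σ).comp (T τ)
  continuousOn : ∀ f, ContinuousOn (fun σ => T σ f) (Ici (0 : ℝ))

/-- The generator `G` of `T`, encoded through its graph: `HasGenerator T f h` says that `f` lies in
the domain of `G` and `G f = h`, the right derivative of `σ ↦ T σ f` at `0`. -/
def HasGenerator (T : ℝ → Y →L[ℝ] Y) (f h : Y) : Prop :=
  HasDerivWithinAt (fun σ => T σ f) h (Ici (0 : ℝ)) 0

namespace HasGenerator

theorem unique (hh : HasGenerator T f h) (hk : HasGenerator T f k) : h = k :=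
  (uniqueDiffOn_Ici (0 : ℝ) 0 self_mem_Ici).eq_deriv _ hh hk

theorem hasDerivWithinAt_Ioi (hT : IsStronglyContinuousSemigroup T) (hf : HasGenerator T f h)
    {τ : ℝ} (hτ : 0 ≤ τ) : HasDerivWithinAt (fun σ => T σ f) (T τ h) (Ioi τ) τ := by
  have hshift : HasDerivWithinAt (fun σ => T (σ - τ) f) h (Ioi τ) τ := by
    have hf' : HasDerivWithinAt (fun σ => T σ f) h (Ici 0) (τ - τ) := by rwa [sub_self]
    have hsub : HasDerivWithinAt (fun σ : ℝ => σ - τ) 1 (Ioi τ) τ :=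
      ((hasDerivAt_id τ).sub_const τ).hasDerivWithinAt
    simpa [Function.comp_def] using HasDerivWithinAt.scomp (h := fun σ : ℝ => σ - τ) τ hf' hsub
      fun σ hσ => sub_nonneg.2 (mem_Ioi.1 hσ).le
  refine ((T τ).hasFDerivAt.comp_hasDerivWithinAt τ hshift).congr (fun σ hσ => ?_) ?_
  · have hadd := hT.add τ (σ - τ) hτ (sub_nonneg.2 (le_of_lt hσ))
    simpa using DFunLike.congr_fun hadd f
  · simp [hT.zero]

theorem eq_integral_sub_integral [CompleteSpace Y] (hT : IsStronglyContinuousSemigroup T)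
    (hf : HasGenerator T f h) :
    f = (∫ τ in (0 : ℝ)..1, T τ f) - ∫ τ in (0 : ℝ)..1, (1 - τ) • T τ h := by
  have hcont (g : Y) : ContinuousOn (fun τ => T τ g) (uIcc 0 1) :=
    (hT.continuousOn g).mono fun τ hτ => by
      rw [uIcc_of_le zero_le_one] at hτ; exact hτ.1
  have hbyParts := intervalIntegral.integral_smul_deriv_eq_deriv_smul_of_hasDeriv_right
    (u := fun τ : ℝ => 1 - τ) (u' := fun _ => -1) (by fun_prop) (hcont f)
    (fun τ _ => ((hasDerivAt_id τ).const_sub 1).hasDerivWithinAt)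
    (fun τ hτ => hf.hasDerivWithinAt_Ioi hT (by simpa using hτ.1.le))
    intervalIntegrable_const (hcont h).intervalIntegrable
  simp only [hT.zero, sub_self, zero_smul, sub_zero, one_smul, one_apply_eq_self,
    neg_smul, intervalIntegral.integral_neg, zero_sub] at hbyParts
  rw [hbyParts]
  abel

end HasGenerator

end Semigroup

section MultiplicationOperators

open scoped BoundedContinuousFunction

variable {α 𝕜 E : Type*} [TopologicalSpace α] [MeasurableSpace α] [OpensMeasurableSpace α]
  [NontriviallyNormedField 𝕜] [NormedAddCommGroup E] [NormedSpace 𝕜 E] {μ : Measure α}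

theorem memLp_top_boundedContinuousFunction [SecondCountableTopologyEither α E] (μ : Measure α)
    (c : α →ᵇ E) : MemLp c ∞ μ :=
  memLp_top_of_bound c.continuous.aestronglyMeasurable ‖c‖ (.of_forall c.norm_coe_le_norm)

variable (𝕜 μ) in
/-- The class in `L^∞` of a bounded continuous function, for an arbitrary measure
(`BoundedContinuousFunction.toLp` requires a finite one). -/
noncomputable def toLpTop [SecondCountableTopologyEither α E] : (α →ᵇ E) →L[𝕜] Lp E ∞ μ :=
  LinearMap.mkContinuous
    { toFun c := (memLp_top_boundedContinuousFunction μ c).toLp c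
      map_add' _ _ := MemLp.toLp_add _ _
      map_smul' _ _ := MemLp.toLp_const_smul _ _ } 1 fun c => by
    rw [one_mul]
    refine (Lp.norm_toLp _ (memLp_top_boundedContinuousFunction μ c)).trans_le ?_
    exact ENNReal.toReal_le_of_le_ofReal (norm_nonneg c)
      (eLpNormEssSup_le_of_ae_bound (.of_forall c.norm_coe_le_norm))

theorem coeFn_toLpTop [SecondCountableTopologyEither α E] (c : α →ᵇ E) : toLpTop 𝕜 μ c =ᵐ[μ] c :=
  (memLp_top_boundedContinuousFunction μ c).coeFn_toLp

variable [SecondCountableTopologyEither α 𝕜] {p : ℝ≥0∞} [Fact (1 ≤ p)]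

/-- The multiplication operator `f ↦ c f` on `Lᵖ` by a bounded continuous scalar function `c`,
as a bounded bilinear map. -/
noncomputable def mulLp : (α →ᵇ 𝕜) →L[𝕜] Lp E p μ →L[𝕜] Lp E p μ :=
  (ContinuousLinearMap.lsmul 𝕜 𝕜).holderL μ ∞ p p ∘L toLpTop 𝕜 μ

theorem coeFn_mulLp (c : α →ᵇ 𝕜) (f : Lp E p μ) : mulLp c f =ᵐ[μ] fun a => c a • f a := by
  filter_upwards [ContinuousLinearMap.coeFn_holder (r := p) (ContinuousLinearMap.lsmul 𝕜 𝕜)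
    (toLpTop 𝕜 μ c) f, coeFn_toLpTop (𝕜 := 𝕜) (μ := μ) c] with a hsmul hc
  exact hsmul.trans (by rw [ContinuousLinearMap.lsmul_apply, hc])

theorem norm_mulLp_apply_le (c : α →ᵇ 𝕜) (f : Lp E p μ) : ‖mulLp c f‖ ≤ ‖c‖ * ‖f‖ := by
  refine Lp.norm_le_mul_norm_of_ae_le_mul ?_
  filter_upwards [coeFn_mulLp c f] with a ha
  rw [ha, norm_smul]
  gcongr
  exact c.norm_coe_le_norm a

theorem mulLp_eq_self {c : α →ᵇ 𝕜} {f : Lp E p μ} {g : α → E} (hfg : f =ᵐ[μ] g)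
    (hc : ∀ a ∈ tsupport g, c a = 1) : mulLp c f = f := by
  refine Lp.ext ?_
  filter_upwards [coeFn_mulLp c f, hfg] with a hmul ha
  rw [hmul, ha]
  by_cases hmem : a ∈ tsupport g
  · rw [hc a hmem, one_smul]
  · rw [image_eq_zero_of_notMem_tsupport hmem, smul_zero]

end MultiplicationOperators

section Translates

open scoped BoundedContinuousFunction

variable {E : Type*} [NormedAddCommGroup E]

/-- The translate `t ↦ c (t - σ)` of a bounded continuous function on the line. -/
noncomputable def translateBCF (c : ℝ →ᵇ E) (σ : ℝ) : ℝ →ᵇ E :=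
  c.compContinuous ⟨fun t => t - σ, by fun_prop⟩

theorem translateBCF_apply (c : ℝ →ᵇ E) (σ t : ℝ) : translateBCF c σ t = c (t - σ) := rfl

theorem translateBCF_zero (c : ℝ →ᵇ E) : translateBCF c 0 = c := by
  ext t
  rw [translateBCF_apply, sub_zero]

theorem hasDerivAt_translateBCF [NormedSpace ℝ E] {c c' : ℝ →ᵇ E}
    (hc : ∀ t, HasDerivAt c (c' t) t) (hc' : UniformContinuous c') :
    HasDerivAt (translateBCF c) (-c') 0 := by
  rw [hasDerivAt_iff_isLittleO, Asymptotics.isLittleO_iff]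
  intro ε hε
  obtain ⟨δ, hδ, hδε⟩ := Metric.uniformContinuous_iff.1 hc' ε hε
  filter_upwards [Metric.ball_mem_nhds 0 hδ] with σ hσ
  refine (BoundedContinuousFunction.norm_le (by positivity)).2 fun t => ?_
  have hderiv (s : ℝ) : HasDerivAt (fun s => c (t - s) + s • c' t) (-c' (t - s) + c' t) s := by
    simpa using ((hc (t - s)).comp_const_sub t s).fun_add ((hasDerivAt_id s).smul_const (c' t))
  have hbound (s : ℝ) (hs : s ∈ Metric.ball 0 δ) : ‖-c' (t - s) + c' t‖ ≤ ε := by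
    rw [neg_add_eq_sub, ← dist_eq_norm]
    exact (hδε (by simpa [dist_eq_norm] using hs)).le
  have hmean := (convex_ball (0 : ℝ) δ).norm_image_sub_le_of_norm_hasDerivWithin_le
    (fun s _ => (hderiv s).hasDerivWithinAt) hbound (Metric.mem_ball_self hδ) hσ
  simpa [translateBCF_apply, add_sub_right_comm] using hmean

end Translates

theorem exists_hasCompactSupport_norm_sub_le {α E : Type*} [TopologicalSpace α] [NormalSpace α]
    [R1Space α] [WeaklyLocallyCompactSpace α] [MeasurableSpace α] [BorelSpace α]
    [NormedAddCommGroup E] [NormedSpace ℝ E] {μ : Measure α} [μ.Regular] {p : ℝ≥0∞}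
    (hp : p ≠ ∞) (f : Lp E p μ) {ε : ℝ} (hε : 0 < ε) :
    ∃ (g : α → E) (k : Lp E p μ), HasCompactSupport g ∧ k =ᵐ[μ] g ∧ ‖f - k‖ ≤ ε := by
  obtain ⟨g, hg, hfg, -, hgp⟩ := (Lp.memLp f).exists_hasCompactSupport_eLpNorm_sub_le hp
    (ENNReal.ofReal_pos.2 hε).ne'
  refine ⟨g, hgp.toLp g, hg, hgp.coeFn_toLp, ?_⟩
  have hsub : f - hgp.toLp g = ((Lp.memLp f).sub hgp).toLp _ := by
    rw [MemLp.toLp_sub (Lp.memLp f) hgp, Lp.toLp_coeFn]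
  rw [hsub, Lp.norm_toLp]
  exact ENNReal.toReal_le_of_le_ofReal hε.le hfg

section Cutoff

open scoped BoundedContinuousFunction

/-- A smooth function on the line that is `1` on `[-1, 1]` and `0` off `(-2, 2)`; the cutoffs
below are its dilates. -/
noncomputable def unitBump : ContDiffBump (0 : ℝ) := ⟨1, 2, one_pos, one_lt_two⟩

theorem norm_unitBump_le_one (t : ℝ) : ‖unitBump t‖ ≤ 1 := by
  rw [norm_of_nonneg unitBump.nonneg]
  exact unitBump.le_one

theorem contDiff_unitBump : ContDiff ℝ 1 unitBump := unitBump.contDiff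

theorem uniformContinuous_deriv_unitBump : UniformContinuous (deriv unitBump) :=
  unitBump.hasCompactSupport.deriv.uniformContinuous_of_continuous
    (contDiff_unitBump.continuous_deriv le_rfl)

theorem exists_norm_deriv_unitBump_le : ∃ C, ∀ t, ‖deriv unitBump t‖ ≤ C :=
  unitBump.hasCompactSupport.deriv.exists_bound_of_continuous
    (contDiff_unitBump.continuous_deriv le_rfl)

/-- The cutoff function `t ↦ χ (t / R)` at scale `R`, where `χ` is `unitBump`. -/
noncomputable def cutoff (R : ℝ) : ℝ →ᵇ ℝ :=
  .ofNormedAddCommGroup (fun t => unitBump (t / R))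
    (contDiff_unitBump.continuous.comp (by fun_prop)) 1
    fun _ => norm_unitBump_le_one _

/-- The derivative `t ↦ R⁻¹ χ' (t / R)` of `cutoff R`. -/
noncomputable def cutoffDeriv (R : ℝ) : ℝ →ᵇ ℝ :=
  .ofNormedAddCommGroup (fun t => R⁻¹ * deriv unitBump (t / R))
    (by have := uniformContinuous_deriv_unitBump.continuous; fun_prop)
    (|R⁻¹| * exists_norm_deriv_unitBump_le.choose)
    fun t => by
      rw [norm_mul]
      exact mul_le_mul_of_nonneg_left (exists_norm_deriv_unitBump_le.choose_spec _) (abs_nonneg _)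

theorem norm_cutoff_le_one (R : ℝ) : ‖cutoff R‖ ≤ 1 :=
  BoundedContinuousFunction.norm_ofNormedAddCommGroup_le _ zero_le_one _

theorem contDiff_cutoff (R : ℝ) : ContDiff ℝ 1 (cutoff R) :=
  contDiff_unitBump.comp (contDiff_id.div_const R)

theorem hasDerivAt_cutoff (R t : ℝ) : HasDerivAt (cutoff R) (cutoffDeriv R t) t := by
  have hbump := (contDiff_unitBump.differentiable one_ne_zero (t / R)).hasDerivAt
  exact (hbump.comp t ((hasDerivAt_id t).div_const R)).congr_deriv (by rw [one_div, mul_comm])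

theorem uniformContinuous_cutoffDeriv (R : ℝ) : UniformContinuous (cutoffDeriv R) := by
  have hdiv : UniformContinuous fun t : ℝ => t / R := by
    simpa only [div_eq_inv_mul] using Real.uniformContinuous_const_mul (x := R⁻¹)
  exact Real.uniformContinuous_const_mul.comp (uniformContinuous_deriv_unitBump.comp hdiv)

theorem tendsto_cutoffDeriv_atTop : Tendsto cutoffDeriv atTop (𝓝 0) := by
  obtain ⟨C, hC⟩ := exists_norm_deriv_unitBump_le
  have hbound : Tendsto (fun R : ℝ => |R⁻¹| * C) atTop (𝓝 0) := by
    simpa using tendsto_inv_atTop_zero.abs.mul_const C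
  refine squeeze_zero_norm (fun R => ?_) hbound
  have hC0 : 0 ≤ C := (norm_nonneg _).trans (hC 0)
  refine (BoundedContinuousFunction.norm_le (by positivity)).2 fun t => ?_
  exact (norm_mul _ _).trans_le (mul_le_mul_of_nonneg_left (hC _) (abs_nonneg _))

variable {R : ℝ}

theorem cutoff_eq_one {t : ℝ} (hR : 0 < R) (ht : |t| ≤ R) : cutoff R t = 1 := by
  refine unitBump.one_of_mem_closedBall ?_
  simpa [unitBump, abs_div, abs_of_pos hR] using div_le_one_of_le₀ ht hR.le

theorem tsupport_cutoff_subset (hR : 0 < R) : tsupport (cutoff R) ⊆ Icc (-(2 * R)) (2 * R) := by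
  refine closure_minimal (fun t ht => ?_) isClosed_Icc
  have hmem : t / R ∈ Function.support unitBump := ht
  rw [unitBump.support_eq, mem_ball_zero_iff, norm_div, norm_of_nonneg hR.le,
    div_lt_iff₀ hR] at hmem
  exact abs_le.1 hmem.le

theorem hasCompactSupport_cutoff (hR : 0 < R) : HasCompactSupport (cutoff R) :=
  isCompact_Icc.of_isClosed_subset (isClosed_tsupport _) (tsupport_cutoff_subset hR)

variable {E : Type*} [NormedAddCommGroup E] [NormedSpace ℝ E] {μ : Measure ℝ} {p : ℝ≥0∞}
  [Fact (1 ≤ p)]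

theorem mulLp_cutoff_eq_self (hR : 0 < R) {f : Lp E p μ} {g : ℝ → E} (hfg : f =ᵐ[μ] g)
    (hg : tsupport g ⊆ Metric.closedBall 0 R) : mulLp (cutoff R) f = f :=
  mulLp_eq_self hfg fun _ ht => cutoff_eq_one hR (mem_closedBall_zero_iff.1 (hg ht))

theorem norm_mulLp_cutoff_le (R : ℝ) (f : Lp E p μ) : ‖mulLp (cutoff R) f‖ ≤ ‖f‖ :=
  (norm_mulLp_apply_le _ _).trans (mul_le_of_le_one_left (norm_nonneg f) (norm_cutoff_le_one R))

theorem tendsto_mulLp_cutoff [μ.Regular] (hp : p ≠ ∞) (f : Lp E p μ) :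
    Tendsto (fun R => mulLp (cutoff R) f) atTop (𝓝 f) := by
  refine Metric.tendsto_atTop'.2 fun ε hε => ?_
  obtain ⟨g, k, hg, hkg, hfk⟩ := exists_hasCompactSupport_norm_sub_le hp f
    (show 0 < ε / 3 by positivity)
  obtain ⟨R₀, hR₀⟩ := hg.isCompact.isBounded.subset_closedBall 0
  refine ⟨max R₀ 0, fun R (hR : max R₀ 0 < R) => ?_⟩
  have hk : mulLp (cutoff R) k = k := mulLp_cutoff_eq_self ((le_max_right _ _).trans_lt hR) hkg
    (hR₀.trans (Metric.closedBall_subset_closedBall ((le_max_left _ _).trans hR.le)))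
  calc dist (mulLp (cutoff R) f) f = ‖mulLp (cutoff R) (f - k) - (f - k)‖ := by
        rw [dist_eq_norm, map_sub, hk, sub_sub_sub_cancel_right]
    _ ≤ ‖f - k‖ + ‖f - k‖ := norm_sub_le_of_le (norm_mulLp_cutoff_le R _) le_rfl
    _ < ε := by linarith

theorem tendsto_mulLp_cutoff_sub_mulLp_cutoffDeriv [μ.Regular] (hp : p ≠ ∞) (f h : Lp E p μ) :
    Tendsto (fun R => mulLp (cutoff R) h - mulLp (cutoffDeriv R) f) atTop (𝓝 h) := by
  have hderiv : Tendsto (fun R => mulLp (cutoffDeriv R) f) atTop (𝓝 0) := by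
    have hcont : Continuous fun c : ℝ →ᵇ ℝ => mulLp c f := by fun_prop
    simpa [Function.comp_def] using (hcont.tendsto 0).comp tendsto_cutoffDeriv_atTop
  simpa using (tendsto_mulLp_cutoff hp h).sub hderiv

theorem norm_mulLp_cutoff_add_norm_sub_le (R : ℝ) (f h : Lp E p μ) :
    ‖mulLp (cutoff R) f‖ + ‖mulLp (cutoff R) h - mulLp (cutoffDeriv R) f‖ ≤
      (1 + ‖cutoffDeriv R‖) * (‖f‖ + ‖h‖) := by
  have hderiv : 0 ≤ ‖cutoffDeriv R‖ * ‖h‖ := by positivity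
  linarith [norm_mulLp_cutoff_le R f, norm_sub_le_of_le (norm_mulLp_cutoff_le R h)
    (norm_mulLp_apply_le (cutoffDeriv R) f)]

theorem exists_tsupport_subset_mulLp_cutoff_ae_eq {R : ℝ} (hR : 0 < R) {f : Lp E p μ} {F : ℝ → E}
    (hF : Continuous F) (hfF : f =ᵐ[μ] F) :
    ∃ g : ℝ → E, Continuous g ∧ tsupport g ⊆ Icc (-(2 * R)) (2 * R) ∧
      mulLp (cutoff R) f =ᵐ[μ] g := by
  refine ⟨fun t => cutoff R t • F t, (cutoff R).continuous.smul hF,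
    (tsupport_smul_subset_left _ F).trans (tsupport_cutoff_subset hR), ?_⟩
  filter_upwards [coeFn_mulLp (cutoff R) f, hfF] with t hmul ht
  rw [hmul, ht]

end Cutoff

section EvolutionSemigroup

variable {X : Type*} [NormedAddCommGroup X] [NormedSpace ℝ X] {U : ℝ → ℝ → X →L[ℝ] X}

/-- The extension of a two-parameter family `U(t,s)`, `s ≤ t`, to all of `ℝ²` that is constant in
`s ≥ t`; it turns strong continuity on the closed half plane `s ≤ t` into strong continuity
everywhere. -/
noncomputable def propagatorExt (U : ℝ → ℝ → X →L[ℝ] X) (q : ℝ × ℝ) : X →L[ℝ] X :=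
  U q.1 (min q.1 q.2)

theorem propagatorExt_of_le {t s : ℝ} (hst : s ≤ t) : propagatorExt U (t, s) = U t s :=
  congrArg (U t) (min_eq_right hst)

theorem continuous_propagatorExt_apply
    (hU : ∀ x, ContinuousOn (fun q : ℝ × ℝ => U q.1 q.2 x) {q | q.2 ≤ q.1}) (x : X) :
    Continuous fun q => propagatorExt U q x :=
  (hU x).comp_continuous (f := fun q : ℝ × ℝ => (q.1, min q.1 q.2)) (by fun_prop)
    fun q => min_le_left q.1 q.2

variable {p : ℝ≥0∞} [Fact (1 ≤ p)]
  {T : ℝ → Lp X p (volume : Measure ℝ) →L[ℝ] Lp X p (volume : Measure ℝ)}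
  {f h : Lp X p (volume : Measure ℝ)}

/-- `T` acts on `Lᵖ(ℝ, X)` as the evolution semigroup of the propagator `U`, that is
`(T(σ) f)(t) = U(t, t - σ) f(t - σ)` for `σ ≥ 0`. -/
def IsEvolutionSemigroup (U : ℝ → ℝ → X →L[ℝ] X)
    (T : ℝ → Lp X p (volume : Measure ℝ) →L[ℝ] Lp X p (volume : Measure ℝ)) : Prop :=
  ∀ σ : ℝ, 0 ≤ σ → ∀ f, T σ f =ᵐ[volume] fun t => U t (t - σ) (f (t - σ))

theorem IsEvolutionSemigroup.coeFn_integral_smul_ae_eq [CompleteSpace X]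
    (hT : IsEvolutionSemigroup U T)
    (hU : ∀ x, ContinuousOn (fun q : ℝ × ℝ => U q.1 q.2 x) {q | q.2 ≤ q.1})
    {a : ℝ → ℝ} (ha : Continuous a) {b : ℝ} (hb : 0 ≤ b)
    (hTf : ContinuousOn (fun τ => T τ f) (Icc 0 b)) :
    ⇑(∫ τ in 0..b, a τ • T τ f) =ᵐ[volume]
      fun t => ∫ s in (t - b)..t, (a (t - s) • propagatorExt U (t, s)) (f s) := by
  let F (τ t : ℝ) : X := (a (t - (t - τ)) • propagatorExt U (t, t - τ)) (f (t - τ))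
  have hFmeas : StronglyMeasurable (Function.uncurry F) := by
    have hV : Continuous fun q : (ℝ × ℝ) × X => propagatorExt U q.1 q.2 :=
      continuous_uncurry_apply_of_pointwise (continuous_propagatorExt_apply hU)
    have hsub : StronglyMeasurable fun q : ℝ × ℝ => ((q.2, q.2 - q.1), f (q.2 - q.1)) :=
      (Continuous.stronglyMeasurable (by fun_prop)).prodMk
        ((Lp.stronglyMeasurable f).comp_measurable (by fun_prop))
    exact (Continuous.stronglyMeasurable (by fun_prop)).smul (hV.comp_stronglyMeasurable hsub)
  have hTF (τ : ℝ) (hτ : 0 ≤ τ) : a τ • T τ f =ᵐ[volume] F τ := by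
    filter_upwards [Lp.coeFn_smul (a τ) (T τ f), hT τ hτ f] with t hsmul ht
    rw [hsmul, Pi.smul_apply, ht, ← propagatorExt_of_le (U := U) (sub_le_self t hτ)]
    simp only [F, sub_sub_cancel, smul_apply]
  have hint : Integrable (fun τ => a τ • T τ f) (volume.restrict (Ioc 0 b)) :=
    ((ha.continuousOn.smul hTf).integrableOn_compact isCompact_Icc).mono_set Ioc_subset_Icc_self
  rw [intervalIntegral.integral_of_le hb]
  refine (coeFn_integral_Lp_ae_eq hint hFmeas.aestronglyMeasurable ?_).trans
    (.of_forall fun t => ?_)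
  · filter_upwards [ae_restrict_mem measurableSet_Ioc] with τ hτ using hTF τ hτ.1.le
  · have hsub := intervalIntegral.integral_comp_sub_left (a := 0) (b := b)
      (fun s => (a (t - s) • propagatorExt U (t, s)) (f s)) t
    rwa [sub_zero, intervalIntegral.integral_of_le hb] at hsub

theorem IsEvolutionSemigroup.exists_continuous_integral_smul_ae_eq [CompleteSpace X]
    (hT : IsEvolutionSemigroup U T)
    (hU : ∀ x, ContinuousOn (fun q : ℝ × ℝ => U q.1 q.2 x) {q | q.2 ≤ q.1})
    {a : ℝ → ℝ} (ha : Continuous a) {b : ℝ} (hb : 0 ≤ b)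
    (hTf : ContinuousOn (fun τ => T τ f) (Icc 0 b)) :
    ∃ F : ℝ → X, Continuous F ∧ ⇑(∫ τ in 0..b, a τ • T τ f) =ᵐ[volume] F := by
  refine ⟨_, ?_, hT.coeFn_integral_smul_ae_eq hU ha hb hTf⟩
  refine continuous_integral_kernel_window (K := fun q => a (q.1 - q.2) • propagatorExt U q)
    (fun x => ?_) ((Lp.memLp f).locallyIntegrable Fact.out) b
  exact (ha.comp (continuous_fst.sub continuous_snd)).smul (continuous_propagatorExt_apply hU x)

namespace HasGenerator

theorem exists_continuous_ae_eq [CompleteSpace X] (hf : HasGenerator T f h)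
    (hS : IsStronglyContinuousSemigroup T) (hT : IsEvolutionSemigroup U T)
    (hU : ∀ x, ContinuousOn (fun q : ℝ × ℝ => U q.1 q.2 x) {q | q.2 ≤ q.1}) :
    ∃ F : ℝ → X, Continuous F ∧ f =ᵐ[volume] F := by
  have hcont (g : Lp X p (volume : Measure ℝ)) : ContinuousOn (fun τ => T τ g) (Icc 0 1) :=
    (hS.continuousOn g).mono Icc_subset_Ici_self
  obtain ⟨F₁, hF₁, hfF₁⟩ := hT.exists_continuous_integral_smul_ae_eq hU
    (continuous_const (y := (1 : ℝ))) zero_le_one (hcont f)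
  obtain ⟨F₂, hF₂, hfF₂⟩ := hT.exists_continuous_integral_smul_ae_eq hU
    (continuous_sub_left (1 : ℝ)) zero_le_one (hcont h)
  simp only [one_smul] at hfF₁
  refine ⟨F₁ - F₂, hF₁.sub hF₂, ?_⟩
  rw [hf.eq_integral_sub_integral hS]
  exact (Lp.coeFn_sub _ _).trans (hfF₁.sub hfF₂)

theorem mulLp_apply (hf : HasGenerator T f h) (hT₀ : T 0 = 1) (hT : IsEvolutionSemigroup U T)
    {c c' : BoundedContinuousFunction ℝ ℝ} (hc : ∀ t, HasDerivAt c (c' t) t)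
    (hc' : UniformContinuous c') : HasGenerator T (mulLp c f) (mulLp c h - mulLp c' f) := by
  have htranslate (σ : ℝ) (hσ : 0 ≤ σ) : T σ (mulLp c f) = mulLp (translateBCF c σ) (T σ f) := by
    refine Lp.ext ?_
    have hmul := (measurePreserving_sub_right (volume : Measure ℝ) σ).quasiMeasurePreserving.ae
      (coeFn_mulLp c f)
    filter_upwards [hT σ hσ (mulLp c f), hT σ hσ f, coeFn_mulLp (translateBCF c σ) (T σ f), hmul]
      with t hTcf hTf hmulT hmulf
    rw [hTcf, hmulf, map_smul, hmulT, hTf, translateBCF_apply]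
  have hmulLp : HasDerivWithinAt (fun σ => mulLp (translateBCF c σ)) (mulLp (-c')) (Ici 0) 0 :=
    (mulLp (α := ℝ) (𝕜 := ℝ) (E := X) (μ := volume) (p := p)).hasFDerivAt.comp_hasDerivWithinAt
      0 (hasDerivAt_translateBCF hc hc').hasDerivWithinAt
  have hprod := hmulLp.clm_apply hf
  rw [hT₀, one_apply_eq_self, translateBCF_zero, map_neg, neg_apply, neg_add_eq_sub] at hprod
  exact hprod.congr htranslate (htranslate 0 le_rfl)

theorem mulLp_cutoff (hf : HasGenerator T f h) (hT₀ : T 0 = 1) (hT : IsEvolutionSemigroup U T)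
    (R : ℝ) :
    HasGenerator T (mulLp (cutoff R) f) (mulLp (cutoff R) h - mulLp (cutoffDeriv R) f) :=
  hf.mulLp_apply hT₀ hT (hasDerivAt_cutoff R) (uniformContinuous_cutoffDeriv R)

theorem exists_continuous_mulLp_cutoff_ae_eq [CompleteSpace X] (hf : HasGenerator T f h)
    (hS : IsStronglyContinuousSemigroup T) (hT : IsEvolutionSemigroup U T)
    (hU : ∀ x, ContinuousOn (fun q : ℝ × ℝ => U q.1 q.2 x) {q | q.2 ≤ q.1}) {R : ℝ} (hR : 0 < R) :
    ∃ g : ℝ → X, Continuous g ∧ tsupport g ⊆ Icc (-(2 * R)) (2 * R) ∧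
      mulLp (cutoff R) f =ᵐ[volume] g :=
  let ⟨_, hF, hfF⟩ := hf.exists_continuous_ae_eq hS hT hU
  exists_tsupport_subset_mulLp_cutoff_ae_eq hR hF hfF

theorem norm_sub_mulLp_cutoff_le (hf : HasGenerator T f h) (hT₀ : T 0 = 1)
    (hT : IsEvolutionSemigroup U T) {R : ℝ} (hRf : mulLp (cutoff R) f = f)
    (d k : Lp X p (volume : Measure ℝ)) :
    ‖f - mulLp (cutoff R) d‖ + ‖h - (mulLp (cutoff R) k - mulLp (cutoffDeriv R) d)‖ ≤
      (1 + ‖cutoffDeriv R‖) * (‖f - d‖ + ‖h - k‖) := by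
  have hcutoff := hf.mulLp_cutoff hT₀ hT R
  rw [hRf] at hcutoff
  have hf_sub : f - mulLp (cutoff R) d = mulLp (cutoff R) (f - d) := by rw [map_sub, hRf]
  have hh_sub : h - (mulLp (cutoff R) k - mulLp (cutoffDeriv R) d) =
      mulLp (cutoff R) (h - k) - mulLp (cutoffDeriv R) (f - d) := by
    rw [map_sub, map_sub, sub_sub_sub_comm, ← hf.unique hcutoff]
  rw [hf_sub, hh_sub]
  exact norm_mulLp_cutoff_add_norm_sub_le R (f - d) (h - k)

end HasGenerator

end EvolutionSemigroup

/-- **Compactly supported cores of evolution generators (Lemma 3.8).**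
Let `T(·)` be an evolution semigroup with generator `G` on `E_p = L^p(ℝ,X)`
(here `1 ≤ p < ∞`), associated with a propagator `U(t,s)` on `I = ℝ`.
Let `D` be a core for `G` such that `φ f ∈ D` for all `f ∈ D` and all
`φ ∈ C¹_c(ℝ)`. Then `D_c = D ∩ C_c(ℝ,X)` is also a core for `G`; moreover a
function `f ∈ D(G) ∩ C_c(ℝ,X)` can be approximated in the graph norm by
elements of `D_c` supported in one fixed bounded interval `J ⊇ supp f`. -/
theorem evolution_generator_compact_core
    {X : Type*} [NormedAddCommGroup X] [NormedSpace ℝ X] [CompleteSpace X]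
    (M ω : ℝ) (hM : 1 ≤ M)
    (U : ℝ → ℝ → X →L[ℝ] X)
    (hU_id : ∀ t : ℝ, U t t = 1)
    (hU_comp : ∀ t r s : ℝ, s ≤ r → r ≤ t → (U t r).comp (U r s) = U t s)
    (hU_cont : ∀ x : X, ContinuousOn (fun q : ℝ × ℝ => U q.1 q.2 x)
      {q : ℝ × ℝ | q.2 ≤ q.1})
    (hU_bound : ∀ t s : ℝ, s ≤ t → ‖U t s‖ ≤ M * exp (ω * (t - s)))
    (p : ℝ≥0∞) [Fact (1 ≤ p)] (hp : p ≠ ∞)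
    -- the associated evolution semigroup on `E_p = L^p(ℝ,X)`
    (T : ℝ → (Lp X p (volume : Measure ℝ) →L[ℝ] Lp X p (volume : Measure ℝ)))
    (hT_eq : ∀ σ : ℝ, 0 ≤ σ → ∀ f : Lp X p (volume : Measure ℝ),
      ⇑(T σ f) =ᵐ[(volume : Measure ℝ)] fun t => U t (t - σ) (f (t - σ)))
    (hT_zero : T 0 = 1)
    (hT_sg : ∀ σ τ : ℝ, 0 ≤ σ → 0 ≤ τ → T (σ + τ) = (T σ).comp (T τ))
    (hT_cont : ∀ f, ContinuousOn (fun σ => T σ f) (Ici (0:ℝ)))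
    -- `(DomG, Gmap)` is the generator `G` of `T(·)`
    (DomG : Set (Lp X p (volume : Measure ℝ)))
    (Gmap : Lp X p (volume : Measure ℝ) → Lp X p (volume : Measure ℝ))
    (hDomG : ∀ f, f ∈ DomG ↔
      ∃ h, HasDerivWithinAt (fun σ => T σ f) h (Ici (0:ℝ)) 0)
    (hGmap : ∀ f ∈ DomG,
      HasDerivWithinAt (fun σ => T σ f) (Gmap f) (Ici (0:ℝ)) 0)
    -- `D` is a core of `G`
    (D : Set (Lp X p (volume : Measure ℝ)))
    (hD_sub : D ⊆ DomG)
    (hD_core : ∀ f ∈ DomG, ∀ ε : ℝ, 0 < ε →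
      ∃ d ∈ D, ‖f - d‖ + ‖Gmap f - Gmap d‖ < ε)
    -- `φ f ∈ D` for all `f ∈ D` and `φ ∈ C¹_c(ℝ)`
    (hD_mul : ∀ f ∈ D, ∀ φ : ℝ → ℝ, ContDiff ℝ 1 φ → HasCompactSupport φ →
      ∀ g : Lp X p (volume : Measure ℝ),
        (⇑g =ᵐ[(volume : Measure ℝ)] fun t => φ t • f t) → g ∈ D) :
    -- `D_c = D ∩ C_c(ℝ,X)` is a core of `G`
    (∀ f ∈ DomG, ∀ ε : ℝ, 0 < ε → ∃ d ∈ D,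
      (∃ g : ℝ → X, Continuous g ∧ HasCompactSupport g ∧
        ⇑d =ᵐ[(volume : Measure ℝ)] g) ∧
      ‖f - d‖ + ‖Gmap f - Gmap d‖ < ε) ∧
    -- approximation with supports in a fixed bounded interval `J ⊇ supp f`
    (∀ f ∈ DomG, ∀ g : ℝ → X, Continuous g → HasCompactSupport g →
      (⇑f =ᵐ[(volume : Measure ℝ)] g) →
      ∃ a b : ℝ, tsupport g ⊆ Icc a b ∧
        ∀ ε : ℝ, 0 < ε → ∃ d ∈ D, ∃ h : ℝ → X,
          Continuous h ∧ tsupport h ⊆ Icc a b ∧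
          ⇑d =ᵐ[(volume : Measure ℝ)] h ∧
          ‖f - d‖ + ‖Gmap f - Gmap d‖ < ε) := by
  have hS : IsStronglyContinuousSemigroup T := ⟨hT_zero, hT_sg, hT_cont⟩
  have hG (f) (hf : f ∈ DomG) : HasGenerator T f (Gmap f) := hGmap f hf
  have hG_cutoff (f) (hf : f ∈ DomG) (R : ℝ) :
      Gmap (mulLp (cutoff R) f) = mulLp (cutoff R) (Gmap f) - mulLp (cutoffDeriv R) f :=
    have hcf := (hG f hf).mulLp_cutoff hT_zero hT_eq R
    (hG _ ((hDomG _).2 ⟨_, hcf⟩)).unique hcf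
  have hD_cutoff (d) (hd : d ∈ D) (R : ℝ) (hR : 0 < R) : mulLp (cutoff R) d ∈ D ∧
      ∃ h : ℝ → X, Continuous h ∧ tsupport h ⊆ Icc (-(2 * R)) (2 * R) ∧
        mulLp (cutoff R) d =ᵐ[volume] h :=
    ⟨hD_mul d hd _ (contDiff_cutoff R) (hasCompactSupport_cutoff hR) _ (coeFn_mulLp _ d),
      (hG d (hD_sub hd)).exists_continuous_mulLp_cutoff_ae_eq hS hT_eq hU_cont hR⟩
  refine ⟨fun f hf ε hε => ?_, fun f hf g _ hg hfg => ?_⟩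
  · obtain ⟨d, hd, hfd⟩ := hD_core f hf ε hε
    have hlim := ((tendsto_mulLp_cutoff hp d).const_sub f).norm.add
      ((tendsto_mulLp_cutoff_sub_mulLp_cutoffDeriv hp d (Gmap d)).const_sub (Gmap f)).norm
    obtain ⟨R, hfR, hR⟩ := ((hlim.eventually_lt_const hfd).and (eventually_gt_atTop 0)).exists
    obtain ⟨hcd, h, hh, hsupp, hdh⟩ := hD_cutoff d hd R hR
    exact ⟨_, hcd, ⟨h, hh, isCompact_Icc.of_isClosed_subset (isClosed_tsupport h) hsupp, hdh⟩,
      hG_cutoff d (hD_sub hd) R ▸ hfR⟩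
  · obtain ⟨R, hR, hgR⟩ := hg.isCompact.isBounded.subset_closedBall_lt 0 0
    refine ⟨-(2 * R), 2 * R, hgR.trans fun t ht => abs_le.1 ?_, fun ε hε => ?_⟩
    · exact (mem_closedBall_zero_iff.1 ht).trans (by linarith)
    obtain ⟨d, hd, hfd⟩ := hD_core f hf (ε / (1 + ‖cutoffDeriv R‖)) (by positivity)
    obtain ⟨hcd, h, hh, hsupp, hdh⟩ := hD_cutoff d hd R hR
    refine ⟨_, hcd, h, hh, hsupp, hdh, hG_cutoff d (hD_sub hd) R ▸ ?_⟩
    exact ((hG f hf).norm_sub_mulLp_cutoff_le hT_zero hT_eq (mulLp_cutoff_eq_self hR hfg hgR)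
      d (Gmap d)).trans_lt ((lt_div_iff₀' (by positivity)).1 hfd)
end
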